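/- Let n ≥ 1 and let m be a positive integer with m > (n+2)/4. Then there exists a constant C = C(m,n) > 0 such that for every Schwartz function u on ℝ^{n+1}, ‖φ₀ * u‖_{L^∞(ℝ^{n+1})} ≤ C (1 + ‖u‖_{BMOₚ(ℝ^{n+1})} (1 + log⁺ ‖u‖_{W₂^{2m,m}(ℝ^{n+1})})), where φ₀ = 𝓕^{−1} ψ₀. -/

import Mathlib

open MeasureTheory Real
open scoped FourierTransform ENNReal

noncomputable section

/-- The model space for `ℝ^{n+1}`: generic point `z = (x, t)` where the spatial
coordinates are `x i = z i.castSucc` (`i : Fin n`) and the time coordinate is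
`t = z (Fin.last n)`. -/
abbrev PSpace (n : ℕ) := EuclideanSpace ℝ (Fin (n + 1))

/-- The parabolic distance `‖z‖ₚ = max (maxᵢ |xᵢ|) √|t|` from `z` to the origin. -/
def pnorm {n : ℕ} (z : PSpace n) : ℝ :=
  max (⨆ i : Fin n, |z i.castSucc|) (Real.sqrt |z (Fin.last n)|)

/-- The parabolic cube of radius `r` centered at `z₀`. -/
def pCube {n : ℕ} (z₀ : PSpace n) (r : ℝ) : Set (PSpace n) :=
  {z | pnorm (z - z₀) < r}

/-- The set of mean oscillations `⨍_Q |u - u_Q|` of `u` over parabolic cubes `Q ⊆ O`. -/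
def oscSet {n : ℕ} (O : Set (PSpace n)) (u : PSpace n → ℝ) : Set ℝ :=
  {v | ∃ z₀ r, 0 < r ∧ pCube z₀ r ⊆ O ∧
    v = ⨍ z in pCube z₀ r, |u z - ⨍ w in pCube z₀ r, u w|}

/-- The parabolic BMO norm of `u` over `O`. -/
def pBMO {n : ℕ} (O : Set (PSpace n)) (u : PSpace n → ℝ) : ℝ := sSup (oscSet O u)

/-- The set of quantities `inf_c ⨍_Q |u - c|` over parabolic cubes `Q ⊆ O`. -/
def infOscSet {n : ℕ} (O : Set (PSpace n)) (u : PSpace n → ℝ) : Set ℝ :=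
  {v | ∃ z₀ r, 0 < r ∧ pCube z₀ r ⊆ O ∧
    v = ⨅ c : ℝ, ⨍ z in pCube z₀ r, |u z - c|}

/-- Time derivative `D_t u`. -/
def Dt {n : ℕ} (u : PSpace n → ℝ) : PSpace n → ℝ :=
  fun z => fderiv ℝ u z (EuclideanSpace.single (Fin.last n) 1)

/-- Spatial derivative in direction `i`. -/
def Dx {n : ℕ} (i : Fin n) (u : PSpace n → ℝ) : PSpace n → ℝ :=
  fun z => fderiv ℝ u z (EuclideanSpace.single i.castSucc 1)

/-- Spatial derivative `D_x^α` for a multi-index `α`. -/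
def DxPow {n : ℕ} (α : Fin n → ℕ) (u : PSpace n → ℝ) : PSpace n → ℝ :=
  (List.finRange n).foldr (fun i v => (Dx i)^[α i] v) u

/-- The mixed derivative `D_t^r D_x^α u`. -/
def mixDeriv {n : ℕ} (r : ℕ) (α : Fin n → ℕ) (u : PSpace n → ℝ) : PSpace n → ℝ :=
  Dt^[r] (DxPow α u)

/-- The `L²(O)` norm. -/
def L2norm {n : ℕ} (O : Set (PSpace n)) (v : PSpace n → ℝ) : ℝ :=
  (eLpNorm v 2 (volume.restrict O)).toReal

/-- The parabolic Sobolev norm `‖u‖_{W₂^{2m,m}(O)} = Σ_{2r+s ≤ 2m} Σ_{|α| = s}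
‖D_t^r D_x^α u‖_{L²(O)}`. -/
def sobNorm {n : ℕ} (m : ℕ) (O : Set (PSpace n)) (u : PSpace n → ℝ) : ℝ :=
  ∑ p ∈ (Finset.range (2 * m + 1) ×ˢ Finset.range (2 * m + 1)).filter
      (fun p => 2 * p.1 + p.2 ≤ 2 * m),
    ∑ α ∈ Finset.Nat.antidiagonalTuple n p.2, L2norm O (mixDeriv p.1 α u)

/-- `log⁺ x = max (log x) 0`. -/
def logPlus (x : ℝ) : ℝ := max (Real.log x) 0

/-- The domain `Ω_T = (0,1)ⁿ × (0,T)`. -/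
def OmegaT (n : ℕ) (T : ℝ) : Set (PSpace n) :=
  {z | (∀ i : Fin n, z i.castSucc ∈ Set.Ioo (0 : ℝ) 1) ∧ z (Fin.last n) ∈ Set.Ioo 0 T}

/-- The anisotropic dilation `η^a z = (η x, η² t)` with `a = (1,…,1,2)`. -/
def pdil {n : ℕ} (η : ℝ) (z : PSpace n) : PSpace n :=
  (EuclideanSpace.equiv (Fin (n + 1)) ℝ).symm
    (fun i => if i = Fin.last n then η ^ 2 * z i else η * z i)

/-- The anisotropic dyadic partition of unity `ψ_j` built from `ψ₀`:
`ψ_j z = ψ₀ (2^{-ja} z) - ψ₀ (2^{-(j-1)a} z)` for `j ≥ 1`. -/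
def psiJ {n : ℕ} (ψ₀ : PSpace n → ℝ) : ℕ → PSpace n → ℝ
  | 0 => ψ₀
  | (j + 1) => fun z =>
      ψ₀ (pdil ((2 : ℝ) ^ (-((j : ℝ) + 1))) z) - ψ₀ (pdil ((2 : ℝ) ^ (-(j : ℝ))) z)

/-- `φ_j = 𝓕⁻¹ ψ_j`, the inverse Fourier transform of `ψ_j`. -/
def phiJ {n : ℕ} (ψ₀ : PSpace n → ℝ) (j : ℕ) : PSpace n → ℂ :=
  𝓕⁻ (fun z => ((psiJ ψ₀ j z : ℝ) : ℂ))

/-- The convolution `(φ * u) z = ∫ φ (z - w) u w dw`. -/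
def pconv {n : ℕ} (φ : PSpace n → ℂ) (u : PSpace n → ℝ) (z : PSpace n) : ℂ :=
  ∫ w, φ (z - w) * (u w : ℂ)

/-- The truncated Lizorkin–Triebel norm `‖u‖_{F̃⁰_{∞,1}} = ‖Σ_{j≥1} |φ_j * u|‖_∞`. -/
def F01norm {n : ℕ} (ψ₀ : PSpace n → ℝ) (u : PSpace n → ℝ) : ℝ :=
  ⨆ z, ∑' j : ℕ, ‖pconv (phiJ ψ₀ (j + 1)) u z‖

/-- The truncated Lizorkin–Triebel norm `‖u‖_{F̃⁰_{∞,2}} = ‖(Σ_{j≥1} |φ_j * u|²)^{1/2}‖_∞`. -/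
def F02norm {n : ℕ} (ψ₀ : PSpace n → ℝ) (u : PSpace n → ℝ) : ℝ :=
  ⨆ z, Real.sqrt (∑' j : ℕ, ‖pconv (phiJ ψ₀ (j + 1)) u z‖ ^ 2)

/-- The Lizorkin–Triebel norm `‖u‖_{F^γ_{∞,2}} = ‖(Σ_{j≥0} 2^{2γj} |φ_j * u|²)^{1/2}‖_∞`. -/
def Fg2norm {n : ℕ} (ψ₀ : PSpace n → ℝ) (γ : ℝ) (u : PSpace n → ℝ) : ℝ :=
  ⨆ z, Real.sqrt (∑' j : ℕ, (2 : ℝ) ^ (2 * γ * j) * ‖pconv (phiJ ψ₀ j) u z‖ ^ 2)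

/-- The anisotropic Besov quasi-norm `‖u‖_{B^s_{p,q}}`. -/
def besovNorm {n : ℕ} (ψ₀ : PSpace n → ℝ) (s : ℝ) (p q : ℝ≥0∞) (u : PSpace n → ℝ) : ℝ :=
  if q = ∞ then ⨆ j : ℕ, (2 : ℝ) ^ (s * j) * (eLpNorm (pconv (phiJ ψ₀ j) u) p volume).toReal
  else (∑' j : ℕ, ((2 : ℝ) ^ (s * j) *
    (eLpNorm (pconv (phiJ ψ₀ j) u) p volume).toReal) ^ q.toReal) ^ (1 / q.toReal)

/-- The standing hypotheses on the cut-off function `ψ₀`: smooth, compactly supported,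
equal to `1` on `{‖z‖ₚ ≤ 1}` and to `0` on `{‖z‖ₚ ≥ 2}`. -/
structure IsCutoff {n : ℕ} (ψ₀ : PSpace n → ℝ) : Prop where
  smooth : ContDiff ℝ (⊤ : ℕ∞) ψ₀
  compact_support : HasCompactSupport ψ₀
  eq_one : ∀ z, pnorm z ≤ 1 → ψ₀ z = 1
  eq_zero : ∀ z, 2 ≤ pnorm z → ψ₀ z = 0

/-! The dyadic cubes `Q_{2^{j+1}}(z)` cover space, and the kernel of `φ * u` at `z` is
`O(2^{-js})` on the `j`-th annulus with `s` larger than the homogeneous dimension `n + 2`, so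
`|φ * u| (z)` is controlled by the averages of `|u|` over these cubes. Such an average is at most
one oscillation more than `|u_Q|`. To bound `|u_Q|`, double the radius of `Q` about
`log⁺ ‖u‖_{L²}` times: each doubling moves the mean by at most `2^{n+2} ‖u‖_{BMOₚ}`, and on the last
cube, of volume at least `‖u‖_{L²}²`, the mean is at most `1` by Jensen's inequality. -/

section Averages

variable {α E : Type*} [MeasurableSpace α] {μ : Measure α} {s t : Set α}
  [NormedAddCommGroup E] {f : α → E}

lemma neZero_restrict (hs : μ s ≠ 0) : NeZero (μ.restrict s) :=
  ⟨mt Measure.restrict_eq_zero.1 hs⟩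

lemma norm_setAverage_le_of_norm_le [NormedSpace ℝ E] {C : ℝ} (hs₀ : μ s ≠ 0) (hs : μ s ≠ ∞)
    (hf : ∀ x, ‖f x‖ ≤ C) : ‖⨍ x in s, f x ∂μ‖ ≤ C := by
  have := neZero_restrict hs₀
  have := Fact.mk hs.lt_top
  have hint := norm_integral_le_of_norm_le_const
    (μ := (μ.restrict s Set.univ)⁻¹ • μ.restrict s) (.of_forall hf)
  rwa [probReal_univ, mul_one] at hint

lemma norm_setAverage_sub_le [NormedSpace ℝ E] [CompleteSpace E] (hs₀ : μ s ≠ 0) (hs : μ s ≠ ∞)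
    (hf : IntegrableOn f s μ) (c : E) :
    ‖(⨍ x in s, f x ∂μ) - c‖ ≤ ⨍ x in s, ‖f x - c‖ ∂μ := by
  have := Fact.mk hs.lt_top
  have hsub : ⨍ x in s, (f x - c) ∂μ = (⨍ x in s, f x ∂μ) - ⨍ _ in s, c ∂μ :=
    integral_sub hf.to_average (integrable_const c).to_average
  rw [setAverage_const hs₀ hs] at hsub
  rw [← hsub]
  exact norm_integral_le_integral_norm _

lemma setAverage_norm_le_add (hs₀ : μ s ≠ 0) (hs : μ s ≠ ∞) (hf : IntegrableOn f s μ) (c : E) :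
    ⨍ x in s, ‖f x‖ ∂μ ≤ (⨍ x in s, ‖f x - c‖ ∂μ) + ‖c‖ := by
  have := Fact.mk hs.lt_top
  have hosc : IntegrableOn (fun x => ‖f x - c‖) s μ := (hf.sub (integrable_const c)).norm
  have hc : IntegrableOn (fun _ => ‖c‖) s μ := integrable_const _
  calc ⨍ x in s, ‖f x‖ ∂μ ≤ ⨍ x in s, (‖f x - c‖ + ‖c‖) ∂μ :=
        integral_mono hf.norm.to_average (hosc.add hc).to_average
          fun x => by simpa using norm_add_le (f x - c) c
    _ = (⨍ x in s, ‖f x - c‖ ∂μ) + ⨍ _ in s, ‖c‖ ∂μ :=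
        integral_add hosc.to_average hc.to_average
    _ = _ := by rw [setAverage_const hs₀ hs]

lemma setAverage_le_mul_setAverage_of_subset {g : α → ℝ} (hst : s ⊆ t)
    (ht : μ t ≠ ∞) (hg : IntegrableOn g t μ) (hg₀ : 0 ≤ g) :
    ⨍ x in s, g x ∂μ ≤ μ.real t / μ.real s * ⨍ x in t, g x ∂μ := by
  have hmono : ∫ x in s, g x ∂μ ≤ ∫ x in t, g x ∂μ :=
    setIntegral_mono_set hg (.of_forall hg₀) hst.eventuallyLE
  rw [← measure_smul_setAverage g ht, smul_eq_mul] at hmono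
  rw [setAverage_eq μ g s, smul_eq_mul, div_mul_eq_mul_div, inv_mul_eq_div]
  gcongr

lemma norm_setAverage_sub_setAverage_le [NormedSpace ℝ E] [CompleteSpace E] (hst : s ⊆ t)
    (hs₀ : μ s ≠ 0) (ht : μ t ≠ ∞) (hf : IntegrableOn f t μ) :
    ‖(⨍ x in s, f x ∂μ) - ⨍ x in t, f x ∂μ‖ ≤
      μ.real t / μ.real s * ⨍ x in t, ‖f x - ⨍ y in t, f y ∂μ‖ ∂μ :=
  have := Fact.mk ht.lt_top
  (norm_setAverage_sub_le hs₀ (measure_ne_top_of_subset hst ht) (hf.mono_set hst) _).trans <|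
    setAverage_le_mul_setAverage_of_subset hst ht (hf.sub (integrable_const _)).norm
      fun _ => norm_nonneg _

lemma sq_setAverage_le_integral_sq_div {g : α → ℝ} (hs₀ : μ s ≠ 0) (hs : μ s ≠ ∞)
    (hg : MemLp g 2 μ) : (⨍ x in s, g x ∂μ) ^ 2 ≤ (∫ x, g x ^ 2 ∂μ) / μ.real s := by
  have := Fact.mk hs.lt_top
  have hJensen : (⨍ x in s, g x ∂μ) ^ 2 ≤ ⨍ x in s, g x ^ 2 ∂μ :=
    (even_two.convexOn_pow).map_set_average_le (by fun_prop) isClosed_univ hs₀ hs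
      (by simp) ((hg.restrict s).integrable one_le_two) hg.integrable_sq.integrableOn
  refine hJensen.trans ?_
  rw [setAverage_eq, smul_eq_mul, inv_mul_eq_div]
  exact div_le_div_of_nonneg_right
    (setIntegral_le_integral hg.integrable_sq (.of_forall fun x => sq_nonneg (g x)))
    measureReal_nonneg

lemma norm_integral_le_of_cover [NormedSpace ℝ E] {ι : Type*} [Countable ι] {s : ι → Set α}
    {g : α → ℝ} {a b : ι → ℝ} {S : ℝ} (hs : ∀ i, MeasurableSet (s i)) (ha : ∀ i, 0 ≤ a i)
    (hg₀ : 0 ≤ g) (hg : ∀ i, IntegrableOn g (s i) μ)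
    (hf : ∀ x, ∃ i, x ∈ s i ∧ ‖f x‖ ≤ a i * g x)
    (hab : ∀ i, a i * ∫ x in s i, g x ∂μ ≤ b i) (hb : HasSum b S) :
    ‖∫ x, f x ∂μ‖ ≤ S := by
  have hb₀ (i) : 0 ≤ b i :=
    (mul_nonneg (ha i) (integral_nonneg hg₀)).trans (hab i)
  have hpt (x) : ‖f x‖ₑ ≤ ∑' i, (s i).indicator (fun x => ENNReal.ofReal (a i * g x)) x := by
    obtain ⟨i, hxi, hi⟩ := hf x
    refine le_trans ?_ (ENNReal.le_tsum i)
    rw [Set.indicator_of_mem hxi, ← ofReal_norm]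
    exact ENNReal.ofReal_le_ofReal hi
  have hmeas (i) : AEMeasurable ((s i).indicator fun x => ENNReal.ofReal (a i * g x)) μ :=
    (aemeasurable_indicator_iff (hs i)).2 ((hg i).const_mul (a i)).aemeasurable.ennreal_ofReal
  have hterm (i) : ∫⁻ x, (s i).indicator (fun x => ENNReal.ofReal (a i * g x)) x ∂μ ≤
      ENNReal.ofReal (b i) := by
    rw [lintegral_indicator (hs i), ← ofReal_integral_eq_lintegral_ofReal
      ((hg i).const_mul (a i)) (.of_forall fun x => mul_nonneg (ha i) (hg₀ x)),
      integral_const_mul]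
    exact ENNReal.ofReal_le_ofReal (hab i)
  rw [← ENNReal.ofReal_le_ofReal_iff (hb.nonneg hb₀), ofReal_norm]
  calc ‖∫ x, f x ∂μ‖ₑ ≤ ∫⁻ x, ‖f x‖ₑ ∂μ := enorm_integral_le_lintegral_enorm _
    _ ≤ ∫⁻ x, ∑' i, (s i).indicator (fun x => ENNReal.ofReal (a i * g x)) x ∂μ :=
        lintegral_mono hpt
    _ = ∑' i, ∫⁻ x, (s i).indicator (fun x => ENNReal.ofReal (a i * g x)) x ∂μ :=
        lintegral_tsum hmeas
    _ ≤ ∑' i, ENNReal.ofReal (b i) := ENNReal.tsum_le_tsum hterm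
    _ = ENNReal.ofReal S := by rw [← ENNReal.ofReal_tsum_of_nonneg hb₀ hb.summable, hb.tsum_eq]

end Averages

section ParabolicCubes

variable {n : ℕ} {r : ℝ}

lemma pnorm_nonneg (z : PSpace n) : 0 ≤ pnorm z :=
  (Real.sqrt_nonneg _).trans (le_max_right _ _)

lemma pnorm_sub_comm (z w : PSpace n) : pnorm (z - w) = pnorm (w - z) := by
  simp [pnorm, abs_sub_comm]

lemma pnorm_le_one_add_norm (z : PSpace n) : pnorm z ≤ 1 + ‖z‖ := by
  have hcoord (i) : |z i| ≤ ‖z‖ := PiLp.norm_apply_le z i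
  refine max_le (Real.iSup_le (fun i => ?_) (by positivity)) (Real.sqrt_le_iff.2 ⟨?_, ?_⟩)
  · linarith [hcoord i.castSucc]
  · positivity
  · nlinarith [hcoord (Fin.last n), norm_nonneg z]

lemma pnorm_lt_iff (z : PSpace n) (hr : 0 < r) :
    pnorm z < r ↔ (∀ i : Fin n, |z i.castSucc| < r) ∧ |z (Fin.last n)| < r ^ 2 := by
  rw [pnorm, max_lt_iff, Real.sqrt_lt' hr]
  refine and_congr_left fun _ => ?_
  rcases isEmpty_or_nonempty (Fin n)
  · simpa using hr
  · exact Set.finite_range _ |>.csSup_lt_iff (Set.range_nonempty _) |>.trans (by simp)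

/-- The half side lengths `(r, …, r, r²)` of a parabolic cube of radius `r`. -/
def pHalfSide (n : ℕ) (r : ℝ) : Fin (n + 1) → ℝ := Fin.snoc (fun _ => r) (r ^ 2)

lemma pCube_eq_preimage_pi_ball (z₀ : PSpace n) (hr : 0 < r) :
    pCube z₀ r =
      WithLp.ofLp ⁻¹' Set.univ.pi fun i => Metric.ball (z₀ i) (pHalfSide n r i) := by
  ext z
  simp [pCube, pnorm_lt_iff _ hr, Fin.forall_fin_succ', pHalfSide, Real.dist_eq]

lemma measurableSet_pCube (z₀ : PSpace n) (hr : 0 < r) : MeasurableSet (pCube z₀ r) := by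
  rw [pCube_eq_preimage_pi_ball z₀ hr]
  exact (PiLp.volume_preserving_ofLp (Fin (n + 1))).measurable
    (.univ_pi fun _ => measurableSet_ball)

lemma volume_pCube (z₀ : PSpace n) (hr : 0 < r) :
    volume (pCube z₀ r) = ENNReal.ofReal (2 ^ (n + 1) * r ^ (n + 2)) := by
  rw [pCube_eq_preimage_pi_ball z₀ hr,
    (PiLp.volume_preserving_ofLp (Fin (n + 1))).measure_preimage
      (MeasurableSet.univ_pi fun _ => measurableSet_ball).nullMeasurableSet,
    volume_pi_pi]
  simp only [Real.volume_ball, Fin.prod_univ_castSucc, pHalfSide, Fin.snoc_castSucc,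
    Fin.snoc_last, Finset.prod_const, Finset.card_univ, Fintype.card_fin]
  rw [← ENNReal.ofReal_pow (by positivity), ← ENNReal.ofReal_mul (by positivity)]
  ring_nf

lemma volume_pCube_ne_zero (z₀ : PSpace n) (hr : 0 < r) : volume (pCube z₀ r) ≠ 0 := by
  rw [volume_pCube z₀ hr, ENNReal.ofReal_ne_zero_iff]
  positivity

lemma volume_pCube_ne_top (z₀ : PSpace n) (hr : 0 < r) : volume (pCube z₀ r) ≠ ∞ := by
  rw [volume_pCube z₀ hr]
  exact ENNReal.ofReal_ne_top

lemma volumeReal_pCube (z₀ : PSpace n) (hr : 0 < r) :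
    volume.real (pCube z₀ r) = 2 ^ (n + 1) * r ^ (n + 2) := by
  rw [measureReal_def, volume_pCube z₀ hr, ENNReal.toReal_ofReal (by positivity)]

lemma pCube_subset_pCube (z₀ : PSpace n) {R : ℝ} (h : r ≤ R) : pCube z₀ r ⊆ pCube z₀ R :=
  fun _ hz => lt_of_lt_of_le hz h

end ParabolicCubes

section ParabolicBMO

variable {n : ℕ} {O : Set (PSpace n)} {u : PSpace n → ℝ} {r : ℝ}

lemma pBMO_nonneg (O : Set (PSpace n)) (u : PSpace n → ℝ) : 0 ≤ pBMO O u := by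
  refine Real.sSup_nonneg ?_
  rintro _ ⟨z₀, r, -, -, rfl⟩
  exact integral_nonneg fun _ => abs_nonneg _

lemma bddAbove_oscSet_of_bounded {M : ℝ} (O : Set (PSpace n)) (hu : ∀ z, |u z| ≤ M) :
    BddAbove (oscSet O u) := by
  refine ⟨M + M, ?_⟩
  rintro _ ⟨z₀, r, hr, -, rfl⟩
  have hs₀ := volume_pCube_ne_zero z₀ hr
  have hs := volume_pCube_ne_top z₀ hr
  have hmean : |⨍ w in pCube z₀ r, u w| ≤ M := norm_setAverage_le_of_norm_le (f := u) hs₀ hs hu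
  have hosc (z) : ‖|u z - ⨍ w in pCube z₀ r, u w|‖ ≤ M + M := by
    rw [Real.norm_eq_abs, abs_abs]
    exact (abs_sub _ _).trans (add_le_add (hu z) hmean)
  exact (le_abs_self _).trans (norm_setAverage_le_of_norm_le hs₀ hs hosc)

lemma setAverage_abs_sub_le_pBMO (hosc : BddAbove (oscSet O u)) {z₀ : PSpace n} (hr : 0 < r)
    (hO : pCube z₀ r ⊆ O) :
    ⨍ z in pCube z₀ r, |u z - ⨍ w in pCube z₀ r, u w| ≤ pBMO O u :=
  le_csSup hosc ⟨z₀, r, hr, hO, rfl⟩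

lemma abs_setAverage_sub_setAverage_two_mul_le (hosc : BddAbove (oscSet O u)) {z₀ : PSpace n}
    (hr : 0 < r) (hO : pCube z₀ (2 * r) ⊆ O) (hu : IntegrableOn u (pCube z₀ (2 * r))) :
    |(⨍ z in pCube z₀ r, u z) - ⨍ z in pCube z₀ (2 * r), u z| ≤ 2 ^ (n + 2) * pBMO O u := by
  have h2r : 0 < 2 * r := by positivity
  have hratio : volume.real (pCube z₀ (2 * r)) / volume.real (pCube z₀ r) = 2 ^ (n + 2) := by
    rw [volumeReal_pCube z₀ hr, volumeReal_pCube z₀ h2r, mul_pow]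
    field_simp
  calc _ ≤ volume.real (pCube z₀ (2 * r)) / volume.real (pCube z₀ r) *
          ⨍ z in pCube z₀ (2 * r), |u z - ⨍ w in pCube z₀ (2 * r), u w| :=
        norm_setAverage_sub_setAverage_le (pCube_subset_pCube z₀ (by linarith))
          (volume_pCube_ne_zero z₀ hr) (volume_pCube_ne_top z₀ h2r) hu
    _ ≤ 2 ^ (n + 2) * pBMO O u := by
        rw [hratio]
        gcongr
        exact setAverage_abs_sub_le_pBMO hosc h2r hO

lemma abs_setAverage_sub_setAverage_two_pow_mul_le (hosc : BddAbove (oscSet O u))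
    {z₀ : PSpace n} (hr : 0 < r) (k : ℕ) (hO : pCube z₀ (2 ^ k * r) ⊆ O)
    (hu : IntegrableOn u (pCube z₀ (2 ^ k * r))) :
    |(⨍ z in pCube z₀ r, u z) - ⨍ z in pCube z₀ (2 ^ k * r), u z| ≤
      k * (2 ^ (n + 2) * pBMO O u) := by
  have hstep {j : ℕ} (hj : j < k) :
      dist (⨍ z in pCube z₀ (2 ^ j * r), u z) (⨍ z in pCube z₀ (2 ^ (j + 1) * r), u z) ≤
        2 ^ (n + 2) * pBMO O u := by
    have hsub : pCube z₀ (2 ^ (j + 1) * r) ⊆ pCube z₀ (2 ^ k * r) :=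
      pCube_subset_pCube z₀ (by gcongr <;> [norm_num; exact hj])
    rw [pow_succ', mul_assoc] at hsub ⊢
    exact abs_setAverage_sub_setAverage_two_mul_le hosc (by positivity) (hsub.trans hO)
      (hu.mono_set hsub)
  simpa [Real.dist_eq] using
    dist_le_range_sum_of_dist_le (f := fun j => ⨍ z in pCube z₀ (2 ^ j * r), u z) k hstep

end ParabolicBMO

section SobolevNorm

variable {n : ℕ}

lemma L2norm_nonneg (O : Set (PSpace n)) (v : PSpace n → ℝ) : 0 ≤ L2norm O v :=
  ENNReal.toReal_nonneg

lemma L2norm_sq {O : Set (PSpace n)} {v : PSpace n → ℝ} (hv : MemLp v 2 (volume.restrict O)) :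
    L2norm O v ^ 2 = ∫ z in O, v z ^ 2 := by
  have h₀ : 0 ≤ ∫ z in O, v z ^ 2 := integral_nonneg fun z => sq_nonneg _
  rw [L2norm, toReal_eLpNorm hv.1,
    lpNorm_eq_integral_norm_rpow_toReal two_ne_zero ENNReal.ofNat_ne_top hv.1]
  simp only [ENNReal.toReal_ofNat, Real.norm_eq_abs, Real.rpow_ofNat, sq_abs]
  exact_mod_cast Real.rpow_inv_natCast_pow h₀ two_ne_zero

lemma mixDeriv_zero_zero (u : PSpace n → ℝ) : mixDeriv 0 0 u = u := by
  simp only [mixDeriv, DxPow, Pi.zero_apply, Function.iterate_zero, id]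
  exact List.foldr_fixed _

lemma L2norm_mixDeriv_le_sobNorm {m r : ℕ} {α : Fin n → ℕ} (h : 2 * r + ∑ i, α i ≤ 2 * m)
    (O : Set (PSpace n)) (u : PSpace n → ℝ) : L2norm O (mixDeriv r α u) ≤ sobNorm m O u := by
  let F (p : ℕ × ℕ) : ℝ :=
    ∑ β ∈ Finset.Nat.antidiagonalTuple n p.2, L2norm O (mixDeriv p.1 β u)
  have hF (p) : 0 ≤ F p := Finset.sum_nonneg fun _ _ => L2norm_nonneg O _
  calc L2norm O (mixDeriv r α u) ≤ F (r, ∑ i, α i) :=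
        Finset.single_le_sum (f := fun β => L2norm O (mixDeriv r β u))
          (fun _ _ => L2norm_nonneg O _) (Finset.Nat.mem_antidiagonalTuple.2 rfl)
    _ ≤ sobNorm m O u :=
        Finset.single_le_sum (f := F) (fun p _ => hF p)
          (by simp only [Finset.mem_filter, Finset.mem_product, Finset.mem_range]; omega)

lemma L2norm_le_sobNorm (m : ℕ) (O : Set (PSpace n)) (u : PSpace n → ℝ) :
    L2norm O u ≤ sobNorm m O u := by
  simpa only [mixDeriv_zero_zero] using
    L2norm_mixDeriv_le_sobNorm (r := 0) (α := 0) (m := m) (by simp) O u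

end SobolevNorm

section LogPlus

lemma logPlus_le_logPlus {x y : ℝ} (hx : 0 ≤ x) (hxy : x ≤ y) : logPlus x ≤ logPlus y := by
  simpa only [logPlus, posLog_apply, max_comm] using posLog_le_posLog hx hxy

lemma exists_nat_le_two_pow_and_le_logPlus (x : ℝ) :
    ∃ k : ℕ, x ≤ 2 ^ k ∧ (k : ℝ) ≤ 2 * logPlus x + 1 := by
  obtain ⟨j, hj, hxj⟩ := exists_nat_pow_near (le_max_right x 1) one_lt_two
  refine ⟨j + 1, (le_max_left x 1).trans hxj.le, ?_⟩
  have hlog : j * Real.log 2 ≤ logPlus x := by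
    rw [← Real.log_pow]
    refine (Real.log_le_log (by positivity) hj).trans ?_
    rcases max_choice x 1 with h | h <;> simp [h, logPlus]
  push_cast
  nlinarith [Real.log_two_gt_d9]

end LogPlus

section Convolution

variable {n : ℕ} {u : PSpace n → ℝ}

lemma abs_setAverage_pCube_le_one {k : ℕ} (hu : MemLp u 2) (hk : L2norm Set.univ u ≤ 2 ^ k)
    {r : ℝ} (hr : 2 ^ k ≤ r) (z : PSpace n) : |⨍ w in pCube z r, u w| ≤ 1 := by
  have h1k : (1 : ℝ) ≤ 2 ^ k := one_le_pow₀ one_le_two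
  have hr₀ : 0 < r := by linarith
  have hvol : ∫ w, u w ^ 2 ≤ volume.real (pCube z r) := by
    calc ∫ w, u w ^ 2
      _ = L2norm Set.univ u ^ 2 := by
          simpa using (L2norm_sq (O := Set.univ) (hu.restrict _)).symm
      _ ≤ r ^ 2 := pow_le_pow_left₀ (L2norm_nonneg _ _) (hk.trans hr) 2
      _ ≤ r ^ (n + 2) := pow_le_pow_right₀ (by linarith) (by omega)
      _ ≤ 2 ^ (n + 1) * r ^ (n + 2) :=
          le_mul_of_one_le_left (by positivity) (one_le_pow₀ one_le_two)
      _ = volume.real (pCube z r) := (volumeReal_pCube z hr₀).symm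
  rw [← sq_le_one_iff_abs_le_one]
  exact (sq_setAverage_le_integral_sq_div (volume_pCube_ne_zero z hr₀)
    (volume_pCube_ne_top z hr₀) hu).trans (div_le_one_of_le₀ hvol measureReal_nonneg)

lemma integrableOn_pCube_of_memLp {p : ℝ≥0∞} (hp : 1 ≤ p) (hu : MemLp u p) (z : PSpace n)
    {r : ℝ} (hr : 0 < r) : IntegrableOn u (pCube z r) :=
  have := Fact.mk (volume_pCube_ne_top z hr).lt_top
  (hu.restrict _).integrable hp

lemma setAverage_abs_pCube_le (hu : MemLp u 2) (hosc : BddAbove (oscSet Set.univ u))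
    (z : PSpace n) {r : ℝ} (hr : 1 ≤ r) :
    ⨍ w in pCube z r, |u w| ≤
      2 ^ (n + 3) * (1 + pBMO Set.univ u * (1 + logPlus (L2norm Set.univ u))) := by
  have hr₀ : 0 < r := by linarith
  obtain ⟨k, hk, hklog⟩ := exists_nat_le_two_pow_and_le_logPlus (L2norm Set.univ u)
  set B := pBMO Set.univ u
  set l := logPlus (L2norm Set.univ u)
  have hB : 0 ≤ B := pBMO_nonneg _ _
  have hsplit : ⨍ w in pCube z r, |u w| ≤ B + |⨍ w in pCube z r, u w| :=
    setAverage_norm_le_add (volume_pCube_ne_zero z hr₀) (volume_pCube_ne_top z hr₀)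
      (integrableOn_pCube_of_memLp one_le_two hu z hr₀) _ |>.trans <|
        add_le_add_left (setAverage_abs_sub_le_pBMO hosc hr₀ (Set.subset_univ _)) _
  have hdouble : |(⨍ w in pCube z r, u w) - ⨍ w in pCube z (2 ^ k * r), u w| ≤
      k * (2 ^ (n + 2) * B) :=
    abs_setAverage_sub_setAverage_two_pow_mul_le hosc hr₀ k (Set.subset_univ _)
      (integrableOn_pCube_of_memLp one_le_two hu z (by positivity))
  have hlarge : |⨍ w in pCube z (2 ^ k * r), u w| ≤ 1 :=
    abs_setAverage_pCube_le_one hu hk (le_mul_of_one_le_right (by positivity) hr) z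
  have htriangle := abs_sub_abs_le_abs_sub (⨍ w in pCube z r, u w)
    (⨍ w in pCube z (2 ^ k * r), u w)
  have hpow : (1 : ℝ) ≤ 2 ^ (n + 2) := one_le_pow₀ one_le_two
  calc ⨍ w in pCube z r, |u w| ≤ B + (1 + k * (2 ^ (n + 2) * B)) := by linarith
    _ ≤ B + (1 + (2 * l + 1) * (2 ^ (n + 2) * B)) := by gcongr
    _ ≤ 2 ^ (n + 2) * B + (2 ^ (n + 2) * 2 + (2 * l + 1) * (2 ^ (n + 2) * B)) := by
        gcongr
        · exact le_mul_of_one_le_left hB hpow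
        · linarith
    _ = 2 ^ (n + 3) * (1 + B * (1 + l)) := by ring

lemma norm_pconv_le_of_decay {φ : PSpace n → ℂ} {A s E : ℝ} (hA : 0 ≤ A) (hs : n + 2 < s)
    (hφ : ∀ z, ‖φ z‖ ≤ A * (1 + pnorm z) ^ (-s)) (z : PSpace n)
    (hu : ∀ r, 1 ≤ r → IntegrableOn u (pCube z r))
    (hE : ∀ r, 1 ≤ r → ⨍ w in pCube z r, |u w| ≤ E) :
    ‖pconv φ u z‖ ≤ A * 2 ^ (2 * n + 3) * E * (1 - 2 ^ (n + 2 - s))⁻¹ := by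
  have hradius (j : ℕ) : (1 : ℝ) ≤ 2 ^ (j + 1) := one_le_pow₀ one_le_two
  have hratio : (2 : ℝ) ^ (n + 2 - s) < 1 :=
    Real.rpow_lt_one_of_one_lt_of_neg one_lt_two (by linarith)
  refine norm_integral_le_of_cover (s := fun j : ℕ => pCube z (2 ^ (j + 1)))
    (g := fun w => |u w|) (a := fun j => A * (2 ^ j) ^ (-s))
    (fun j => measurableSet_pCube z (by positivity)) (fun j => by positivity)
    (fun w => abs_nonneg _) (fun j => (hu _ (hradius j)).abs) (fun w => ?_) (fun j => ?_)
    ((hasSum_geometric_of_lt_one (by positivity) hratio).mul_left (A * 2 ^ (2 * n + 3) * E))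
  · obtain ⟨j, hj, hj'⟩ :=
      exists_nat_pow_near (le_add_of_nonneg_right (pnorm_nonneg (z - w))) one_lt_two
    refine ⟨j, ?_, ?_⟩
    · change pnorm (w - z) < _
      rw [pnorm_sub_comm]
      linarith
    · rw [norm_mul, Complex.norm_real, Real.norm_eq_abs]
      gcongr
      refine (hφ _).trans (mul_le_mul_of_nonneg_left ?_ hA)
      exact Real.rpow_le_rpow_of_nonpos (by positivity) hj (by linarith)
  · have hscale : ((2 : ℝ) ^ j) ^ (-s) * (2 ^ j) ^ (n + 2) = (2 ^ (n + 2 - s)) ^ j := by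
      rw [← Real.rpow_natCast _ (n + 2), ← Real.rpow_add (by positivity), ← Real.rpow_natCast 2 j,
        ← Real.rpow_mul zero_le_two, ← Real.rpow_natCast, ← Real.rpow_mul zero_le_two]
      push_cast
      ring_nf
    rw [← measure_smul_setAverage _ (volume_pCube_ne_top z (by positivity)), smul_eq_mul,
      volumeReal_pCube z (by positivity)]
    calc A * (2 ^ j) ^ (-s) *
          (2 ^ (n + 1) * (2 ^ (j + 1)) ^ (n + 2) * ⨍ w in pCube z (2 ^ (j + 1)), |u w|)
        ≤ A * (2 ^ j) ^ (-s) * (2 ^ (n + 1) * (2 ^ (j + 1)) ^ (n + 2) * E) := by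
          gcongr
          exact hE _ (hradius j)
      _ = A * 2 ^ (2 * n + 3) * E * ((2 ^ j) ^ (-s) * (2 ^ j) ^ (n + 2)) := by ring
      _ = A * 2 ^ (2 * n + 3) * E * (2 ^ (n + 2 - s)) ^ j := by rw [hscale]

lemma exists_norm_le_mul_one_add_pnorm_rpow (φ : SchwartzMap (PSpace n) ℂ) (k : ℕ) :
    ∃ A : ℝ, 0 < A ∧ ∀ z, ‖φ z‖ ≤ A * (1 + pnorm z) ^ (-k : ℝ) := by
  obtain ⟨M, hM⟩ : ∃ M : ℝ, ∀ z, (1 + ‖z‖) ^ k * ‖φ z‖ ≤ M :=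
    ⟨_, fun z => by simpa using
      SchwartzMap.one_add_le_sup_seminorm_apply (𝕜 := ℝ) (m := (k, 0)) le_rfl le_rfl φ z⟩
  have hM₀ : 0 ≤ M := le_trans (by positivity) (hM 0)
  refine ⟨2 ^ k * M + 1, by positivity, fun z => ?_⟩
  have hz := pnorm_nonneg z
  rw [Real.rpow_neg (by positivity), Real.rpow_natCast, ← div_eq_mul_inv,
    le_div_iff₀ (by positivity)]
  calc ‖φ z‖ * (1 + pnorm z) ^ k ≤ ‖φ z‖ * (2 * (1 + ‖z‖)) ^ k := by
        gcongr
        linarith [pnorm_le_one_add_norm z, norm_nonneg z]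
    _ = 2 ^ k * ((1 + ‖z‖) ^ k * ‖φ z‖) := by rw [mul_pow]; ring
    _ ≤ 2 ^ k * M := by gcongr; exact hM z
    _ ≤ 2 ^ k * M + 1 := by linarith

lemma exists_schwartzMap_coe_eq_phiJ_zero {ψ₀ : PSpace n → ℝ} (hψ : ContDiff ℝ (⊤ : ℕ∞) ψ₀)
    (hψc : HasCompactSupport ψ₀) : ∃ φ : SchwartzMap (PSpace n) ℂ, ⇑φ = phiJ ψ₀ 0 :=
  have hsmooth : ContDiff ℝ (⊤ : ℕ∞) fun z => (ψ₀ z : ℂ) := Complex.ofRealCLM.contDiff.comp hψ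
  have hcompact : HasCompactSupport fun z => (ψ₀ z : ℂ) :=
    hψc.comp_left (g := fun x : ℝ => (x : ℂ)) Complex.ofReal_zero
  ⟨𝓕⁻ (hcompact.toSchwartzMap hsmooth), SchwartzMap.fourierInv_coe _⟩

end Convolution

theorem conv_phi0_bound_general {n : ℕ} (φ : SchwartzMap (PSpace n) ℂ) :
    ∃ C : ℝ, 0 < C ∧ ∀ u : PSpace n → ℝ, MemLp u 2 → BddAbove (oscSet Set.univ u) →
      ∀ z, ‖pconv φ u z‖ ≤
        C * (1 + pBMO Set.univ u * (1 + logPlus (L2norm Set.univ u))) := by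
  obtain ⟨A, hA, hφ⟩ := exists_norm_le_mul_one_add_pnorm_rpow φ (n + 3)
  have hs : (n : ℝ) + 2 < (n + 3 : ℕ) := by push_cast; linarith
  have hratio : 0 < 1 - (2 : ℝ) ^ ((n : ℝ) + 2 - (n + 3 : ℕ)) :=
    sub_pos.2 (Real.rpow_lt_one_of_one_lt_of_neg one_lt_two (sub_neg.2 hs))
  refine ⟨A * 2 ^ (2 * n + 3) * 2 ^ (n + 3) * (1 - 2 ^ ((n : ℝ) + 2 - (n + 3 : ℕ)))⁻¹,
    by positivity, fun u hu hosc z => ?_⟩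
  refine (norm_pconv_le_of_decay hA.le hs hφ z
    (fun r hr => integrableOn_pCube_of_memLp one_le_two hu z (by linarith))
    (fun r hr => setAverage_abs_pCube_le hu hosc z hr)).trans_eq ?_
  ring

/-- **Estimate of `‖φ₀ * u‖_∞`** (Lemma 2.12):
`‖φ₀ * u‖_∞ ≤ C (1 + ‖u‖_{BMOₚ} (1 + log⁺ ‖u‖_{W₂^{2m,m}}))`, where `φ₀ = 𝓕⁻¹ ψ₀`. -/
theorem conv_phi0_bound (n m : ℕ) (hn : 1 ≤ n) (hm : 0 < m)
    (hmn : ((n : ℝ) + 2) / 4 < m) (ψ₀ : PSpace n → ℝ) (hψ : IsCutoff ψ₀) :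
    ∃ C : ℝ, 0 < C ∧ ∀ u : SchwartzMap (PSpace n) ℝ,
      (⨆ z, ‖pconv (phiJ ψ₀ 0) (⇑u) z‖) ≤
        C * (1 + pBMO Set.univ ⇑u * (1 + logPlus (sobNorm m Set.univ ⇑u))) := by
  obtain ⟨φ, hφ⟩ := exists_schwartzMap_coe_eq_phiJ_zero hψ.smooth hψ.compact_support
  obtain ⟨C, hC, hbound⟩ := conv_phi0_bound_general φ
  refine ⟨C, hC, fun u => ciSup_le fun z => hφ ▸ (hbound u (u.memLp 2) ?_ z).trans ?_⟩
  · exact bddAbove_oscSet_of_bounded _ (u.norm_le_seminorm ℝ)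
  · gcongr
    · exact pBMO_nonneg _ _
    · exact logPlus_le_logPlus (L2norm_nonneg _ _) (L2norm_le_sobNorm m _ _)

end
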